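/- For every integer n > 2^7 = 128, every positive integer N, and every n-linear form U : (ℝ^N)^n → ℝ, one has (∑_{i₁,…,iₙ=1}^N |U(e_{i₁},…,e_{iₙ})|^{2n/(n+1)})^{(n+1)/(2n)} ≤ 1.306156 · (n-1)^{0.526322} · ‖U‖. -/

import Mathlib

open Real

/-- The Bohnenblust--Hille quantity of an `n`-linear form on `ℓ_∞^N` over `ℝ`:
`(∑_{i₁,…,iₙ} |U(e_{i₁},…,e_{iₙ})|^{2n/(n+1)})^{(n+1)/(2n)}`. -/
noncomputable def BHreal (n N : ℕ)
    (U : ContinuousMultilinearMap ℝ (fun _ : Fin n => (Fin N → ℝ)) ℝ) : ℝ :=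
  (∑ i : Fin n → Fin N,
      |U (fun k => Pi.single (i k) (1 : ℝ))| ^ ((2 * n : ℝ) / (n + 1)))
    ^ ((n + 1 : ℝ) / (2 * n))

open scoped NNReal

lemma sum_cons_aux {α M : Type*} [Fintype α] [AddCommMonoid M] (n : ℕ) (f : (Fin (n+1) → α) → M) :
    ∑ x, f x = ∑ a, ∑ y : Fin n → α, f (Fin.cons a y) := by
  rw [← (Fin.consEquiv (fun _ : Fin (n+1) => α)).sum_comp, Fintype.sum_prod_type]
  rfl

lemma sum_insertNth_aux {α M : Type*} [Fintype α] [AddCommMonoid M] (n : ℕ) (j : Fin (n+1))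
    (f : (Fin (n+1) → α) → M) :
    ∑ x, f x = ∑ y : Fin n → α, ∑ a, f (j.insertNth a y) := by
  rw [← (Fin.insertNthEquiv (fun _ : Fin (n+1) => α) j).sum_comp, Fintype.sum_prod_type,
    Finset.sum_comm]
  rfl

lemma holder_aux {κ β : Type*} [Fintype κ] [Fintype β] (w : ℝ≥0) (hw : Fintype.card κ * w = 1)
    (f : κ → β → ℝ≥0) :
    ∑ x, ∏ j, f j x ^ (w : ℝ) ≤ ∏ j, (∑ x, f j x) ^ (w : ℝ) := by
  have hw0 : (w : ℝ) ≠ 0 := by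
    intro h
    have : w = 0 := by exact_mod_cast h
    simp [this] at hw
  by_cases h : ∃ j, ∑ x, f j x = 0
  · obtain ⟨j, hj⟩ := h
    have : ∀ x, ∏ j, f j x ^ (w : ℝ) = 0 := by
      intro x
      apply Finset.prod_eq_zero (Finset.mem_univ j)
      have : f j x = 0 := (Finset.sum_eq_zero_iff.1 hj) x (Finset.mem_univ x)
      rw [this, NNReal.zero_rpow hw0]
    simp [this]
  · push Not at h
    have key : ∀ x, ∏ j, f j x ^ (w : ℝ) ≤
        (∏ j, (∑ x, f j x) ^ (w : ℝ)) * ∑ j, w * (f j x / ∑ x, f j x) := by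
      intro x
      have := NNReal.geom_mean_le_arith_mean_weighted Finset.univ (fun _ : κ => w)
        (fun j => f j x / ∑ x, f j x) (by simpa using hw)
      calc ∏ j, f j x ^ (w : ℝ) = (∏ j, (∑ x, f j x) ^ (w : ℝ)) *
            ∏ j, (f j x / ∑ x, f j x) ^ (w : ℝ) := by
            rw [← Finset.prod_mul_distrib]
            refine Finset.prod_congr rfl fun j _ => ?_
            rw [← NNReal.mul_rpow, mul_div_cancel₀ _ (h j)]
        _ ≤ _ := by gcongr
    refine (Finset.sum_le_sum fun x _ => key x).trans ?_
    rw [← Finset.mul_sum, Finset.sum_comm]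
    have : ∀ j, ∑ x, w * (f j x / ∑ x, f j x) = w := by
      intro j
      rw [← Finset.mul_sum, ← Finset.sum_div, div_self (h j), mul_one]
    simp only [this]
    simp [hw]

lemma lw_aux {α : Type*} [Fintype α] (m : ℕ) (hm : 1 ≤ m)
    (g : Fin (m+1) → (Fin m → α) → ℝ≥0) :
    ∑ x : Fin (m+1) → α, ∏ j, g j (j.removeNth x) ≤
      ∏ j, (∑ y, g j y ^ (m:ℝ)) ^ (1/(m:ℝ)) := by
  induction m, hm using Nat.le_induction with
  | base =>
    rw [sum_cons_aux]
    rw [Fin.prod_univ_two]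
    simp only [fun x : Fin (1+1) → α => Fin.prod_univ_two (fun j : Fin (1+1) => g j (j.removeNth x))]
    have h0 : ∀ (a : α) (y : Fin 1 → α), Fin.removeNth (0 : Fin 2) (Fin.cons a y : Fin 2 → α) = y := by
      intro a y; ext i; simp [Fin.removeNth]
    have h1 : ∀ (a : α) (y : Fin 1 → α), Fin.removeNth (1 : Fin 2) (Fin.cons a y : Fin 2 → α) = fun _ => a := by
      intro a y; ext i; 
      have : i = 0 := Subsingleton.elim _ _
      subst this
      simp [Fin.removeNth]
    simp only [h0, h1]
    simp only [← Finset.sum_mul, ← Finset.mul_sum]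
    simp
    apply le_of_eq
    congr 1
    rw [← (Equiv.funUnique (Fin 1) α).symm.sum_comp]
    rfl
  | succ m hm ih =>
    have hm0 : (0:ℝ) < m := by exact_mod_cast hm
    rw [sum_cons_aux, Fin.prod_univ_succ]
    have h0 : ∀ (a : α) (y : Fin (m+1) → α),
        Fin.removeNth (0 : Fin (m+2)) (Fin.cons a y : Fin (m+2) → α) = y := by
      intro a y; ext i; simp [Fin.removeNth]
    have h1 : ∀ (j : Fin (m+1)) (a : α) (y : Fin (m+1) → α),
        Fin.removeNth j.succ (Fin.cons a y : Fin (m+2) → α) = 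
          (Fin.cons a (j.removeNth y) : Fin (m+1) → α) := by
      intro j a y; ext i
      refine Fin.cases ?_ (fun i => ?_) i <;> simp [Fin.removeNth]
    simp only [Fin.prod_univ_succ (n := m+1), h0, h1]
    have hpq : Real.HolderConjugate ((m:ℝ)+1) (((m:ℝ)+1)/m) := by
      rw [Real.holderConjugate_iff]
      refine ⟨by linarith, ?_⟩
      field_simp
      ring
    have step : ∀ a : α, ∑ y : Fin (m+1) → α, g 0 y *
        ∏ j : Fin (m+1), g j.succ (Fin.cons a (j.removeNth y) : Fin (m+1) → α) ≤
        (∑ y, g 0 y ^ ((m:ℝ)+1)) ^ (1/((m:ℝ)+1)) *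
        ∏ j : Fin (m+1), (∑ y : Fin m → α, 
          g j.succ (Fin.cons a y : Fin (m+1) → α) ^ ((m:ℝ)+1)) ^ (1/((m:ℝ)+1)) := by
      intro a
      refine (NNReal.inner_le_Lp_mul_Lq Finset.univ _ _ hpq).trans ?_
      gcongr
      have := ih (fun j y => g j.succ (Fin.cons a y : Fin (m+1) → α) ^ (((m:ℝ)+1)/m))
      simp only [← NNReal.finsetProd_rpow]
      refine (NNReal.rpow_le_rpow this (by positivity)).trans (le_of_eq ?_)
      rw [← NNReal.finsetProd_rpow]
      refine Finset.prod_congr rfl fun j _ => ?_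
      rw [← NNReal.rpow_mul]
      have e1 : 1 / (m:ℝ) * (1 / (((m:ℝ)+1)/m)) = 1/((m:ℝ)+1) := by field_simp
      rw [e1]
      congr 1
      refine Finset.sum_congr rfl fun y _ => ?_
      rw [← NNReal.rpow_mul]
      congr 1
      field_simp
    refine (Finset.sum_le_sum fun a _ => step a).trans ?_
    rw [← Finset.mul_sum]
    push_cast
    gcongr
    have := holder_aux (κ := Fin (m+1)) (β := α) (1/((m:ℝ≥0)+1)) (by
        simp) (fun j a => ∑ y : Fin m → α, 
          g j.succ (Fin.cons a y : Fin (m+1) → α) ^ ((m:ℝ)+1))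
    simp only [NNReal.coe_div, NNReal.coe_add, NNReal.coe_one, NNReal.coe_natCast] at this
    refine this.trans (le_of_eq ?_)
    refine Finset.prod_congr rfl fun j _ => ?_
    rw [sum_cons_aux]

lemma blei_aux {α : Type*} [Fintype α] (m : ℕ) (hm : 1 ≤ m)
    (b : (Fin (m+1) → α) → ℝ≥0) :
    ∑ x, b x ^ (((m:ℝ)+1)/(m+2)) ≤
      ∏ j : Fin (m+1), (∑ y : Fin m → α, (∑ a, b (j.insertNth a y)) ^ ((m:ℝ)/(m+1)))
        ^ (((m:ℝ)+1)/((m+2)*m)) := by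
  have hm0 : (0:ℝ) < m := by exact_mod_cast hm
  set F : Fin (m+1) → (Fin m → α) → ℝ≥0 := fun j y => ∑ a, b (j.insertNth a y) with hF
  set G : Fin (m+1) → ℝ≥0 := fun j => ∑ y, F j y ^ ((m:ℝ)/(m+1)) with hG
  let f : Option (Fin (m+1)) → (Fin (m+1) → α) → ℝ≥0 := fun o x =>
    Option.elim o (∏ j, F j (j.removeNth x) ^ (1/((m:ℝ)+1)))
      (fun j => b x * F j (j.removeNth x) ^ (-(1/((m:ℝ)+1))))
  have hH := holder_aux (1/((m:ℝ≥0)+2)) (by simp; field_simp; norm_num; ring) f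
  simp only [NNReal.coe_div, NNReal.coe_add, NNReal.coe_one, NNReal.coe_natCast,
    NNReal.coe_ofNat, Fintype.prod_option] at hH
  have hpt : ∀ x, b x ^ (((m:ℝ)+1)/(m+2)) ≤ f none x ^ (1/((m:ℝ)+2)) *
      ∏ j, f (some j) x ^ (1/((m:ℝ)+2)) := by
    intro x
    by_cases hb : b x = 0
    · rw [hb, NNReal.zero_rpow (by positivity)]; exact zero_le
    · have hFx : ∀ j : Fin (m+1), F j (j.removeNth x) ≠ 0 := by
        intro j h
        have := (Finset.sum_eq_zero_iff.1 h) (x j) (Finset.mem_univ _)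
        rw [Fin.insertNth_self_removeNth] at this
        exact hb this
      apply le_of_eq
      rw [NNReal.finsetProd_rpow, ← NNReal.mul_rpow]
      have : f none x * ∏ j, f (some j) x = b x ^ ((m:ℝ)+1) := by
        simp only [f, Option.elim]
        rw [← Finset.prod_mul_distrib]
        have : ∀ j : Fin (m+1), F j (j.removeNth x) ^ (1/((m:ℝ)+1)) *
          (b x * F j (j.removeNth x) ^ (-(1/((m:ℝ)+1)))) = b x := by
          intro j
          rw [NNReal.rpow_neg]
          have : F j (j.removeNth x) ^ (1/((m:ℝ)+1)) ≠ 0 := by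
            simp [NNReal.rpow_eq_zero_iff, hFx j]
          field_simp
        simp only [this]
        simp
        rw [← NNReal.rpow_natCast]; push_cast; rfl
      rw [this, ← NNReal.rpow_mul]
      congr 1; field_simp
  refine (Finset.sum_le_sum fun x _ => hpt x).trans (hH.trans ?_)
  have hsome : ∀ j, ∑ x, f (some j) x = G j := by
    intro j
    rw [sum_insertNth_aux m j]
    refine Finset.sum_congr rfl fun y _ => ?_
    simp only [f, Option.elim, Fin.removeNth_insertNth]
    rw [← Finset.sum_mul]
    change F j y * _ = _
    by_cases h : F j y = 0
    · rw [h, NNReal.zero_rpow (by positivity : (m:ℝ)/(m+1) ≠ 0)]; simp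
    · nth_rewrite 1 [← NNReal.rpow_one (F j y)]
      rw [← NNReal.rpow_add h]
      congr 1; field_simp; ring
  have hnone : ∑ x, f none x ≤ ∏ j, G j ^ (1/(m:ℝ)) := by
    refine (lw_aux m hm (fun j y => F j y ^ (1/((m:ℝ)+1)))).trans (le_of_eq ?_)
    refine Finset.prod_congr rfl fun j _ => ?_
    congr 1
    refine Finset.sum_congr rfl fun y _ => ?_
    rw [← NNReal.rpow_mul]; congr 1; field_simp
  simp only [hsome]
  calc _ ≤ (∏ j, G j ^ (1/(m:ℝ))) ^ (1/((m:ℝ)+2)) * ∏ j, G j ^ (1/((m:ℝ)+2)) := by gcongr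
    _ = _ := by
      rw [← NNReal.finsetProd_rpow, ← Finset.prod_mul_distrib]
      refine Finset.prod_congr rfl fun j _ => ?_
      rw [← NNReal.rpow_mul]
      change _ = G j ^ _
      by_cases h : G j = 0
      · rw [h, NNReal.zero_rpow (by positivity : 1/(m:ℝ) * (1/((m:ℝ)+2)) ≠ 0),
          NNReal.zero_rpow (by positivity : ((m:ℝ)+1)/((m+2)*m) ≠ 0), zero_mul]
      · rw [← NNReal.rpow_add h]
        congr 1; field_simp; ring
def sg (b : Bool) : ℝ := if b then 1 else -1

lemma moments (N : ℕ) (a : Fin N → ℝ) :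
    (∑ e : Fin N → Bool, (∑ i, sg (e i) * a i)^2 = 2^N * ∑ i, a i^2) ∧
    (∑ e : Fin N → Bool, (∑ i, sg (e i) * a i)^4 = 2^N * (3*(∑ i, a i^2)^2 - 2*∑ i, a i^4)) ∧
    (∑ e : Fin N → Bool, (∑ i, sg (e i) * a i)^6 = 2^N * (15*(∑ i, a i^2)^3
      - 30*(∑ i, a i^2)*(∑ i, a i^4) + 16 * ∑ i, a i^6)) ∧
    (∑ e : Fin N → Bool, (∑ i, sg (e i) * a i)^8 = 2^N * (105*(∑ i, a i^2)^4
      - 420*(∑ i, a i^2)^2*(∑ i, a i^4) + 140*(∑ i, a i^4)^2 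
      + 448 * (∑ i, a i^2) * (∑ i, a i^6) - 272 * ∑ i, a i^8)) := by
  induction N with
  | zero => simp
  | succ N ih =>
    obtain ⟨h2, h4, h6, h8⟩ := ih (fun i => a i.succ)
    have e0 : ∑ e : Fin N → Bool, (1:ℝ) = 2^N := by simp
    simp only [sum_cons_aux, Fin.sum_univ_succ, Fin.cons_zero, Fin.cons_succ, Fintype.sum_bool]
    simp only [← Finset.sum_add_distrib]
    simp only [sg, if_true, Bool.false_eq_true, if_false] at *
    set x := a 0
    refine ⟨?_, ?_, ?_, ?_⟩
    · have : ∀ S : ℝ, (1*x+S)^2 + (-1*x+S)^2 = 2*S^2 + 2*x^2*1 := by intro S; ring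
      simp only [this, Finset.sum_add_distrib, ← Finset.mul_sum, h2, e0]
      ring
    · have : ∀ S : ℝ, (1*x+S)^4 + (-1*x+S)^4 = 2*S^4 + 12*x^2*S^2+ 2*x^4*1 := by intro S; ring
      simp only [this, Finset.sum_add_distrib, ← Finset.mul_sum, h2, h4, e0]
      ring
    · have : ∀ S : ℝ, (1*x+S)^6 + (-1*x+S)^6 = 2*S^6+30*x^2*S^4 + 30*x^4*S^2+ 2*x^6*1 := by
        intro S; ring
      simp only [this, Finset.sum_add_distrib, ← Finset.mul_sum, h2, h4, h6, e0]
      ring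
    · have : ∀ S : ℝ, (1*x+S)^8 + (-1*x+S)^8 = 
        2*S^8+56*x^2*S^6+140*x^4*S^4 + 56*x^6*S^2+ 2*x^8*1 := by intro S; ring
      simp only [this, Finset.sum_add_distrib, ← Finset.mul_sum, h2, h4, h6, h8, e0]
      ring

lemma log_cubic (u : ℝ) (hu : 0 < u) : log u ≤ -11/6 + 3*u - 3/2*u^2 + u^3/3 := by
  let φ : ℝ → ℝ := fun u => -11/6 + 3*u - 3/2*u^2 + u^3/3 - log u
  have hd : ∀ x, 0 < x → HasDerivAt φ ((x-1)^3/x) x := by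
    intro x hx
    have h := ((((hasDerivAt_const x (-11/6:ℝ)).add ((hasDerivAt_id x).const_mul 3)).sub
      ((hasDerivAt_pow 2 x).const_mul (3/2))).add ((hasDerivAt_pow 3 x).div_const 3)).sub
      (Real.hasDerivAt_log hx.ne')
    have e : (x-1)^3/x = 0 + 3*1 - 3/2*(((2:ℕ):ℝ)*x^(2-1)) + ((3:ℕ):ℝ)*x^(3-1)/3 - x⁻¹ := by
      norm_num
      field_simp
      ring
    rw [e]
    exact h
  have h1 : φ 1 = 0 := by simp [φ]; norm_num
  suffices 0 ≤ φ u by simp only [φ] at this; linarith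
  rw [← h1]
  rcases le_total u 1 with h | h
  · have : AntitoneOn φ (Set.Icc u 1) := by
      apply antitoneOn_of_deriv_nonpos (convex_Icc _ _)
      · intro x hx; exact (hd x (by linarith [hx.1])).continuousAt.continuousWithinAt
      · intro x hx; rw [interior_Icc] at hx
        exact (hd x (by linarith [hx.1])).differentiableAt.differentiableWithinAt
      · intro x hx; rw [interior_Icc] at hx
        rw [(hd x (by linarith [hx.1])).deriv]
        apply div_nonpos_of_nonpos_of_nonneg _ (by linarith [hx.1])
        have : 0 ≤ (1-x)^3 := pow_nonneg (by linarith [hx.2]) 3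
        nlinarith
    exact this ⟨le_refl _, h⟩ ⟨h, le_refl _⟩ h
  · have : MonotoneOn φ (Set.Icc 1 u) := by
      apply monotoneOn_of_deriv_nonneg (convex_Icc _ _)
      · intro x hx; exact (hd x (by linarith [hx.1])).continuousAt.continuousWithinAt
      · intro x hx; rw [interior_Icc] at hx
        exact (hd x (by linarith [hx.1])).differentiableAt.differentiableWithinAt
      · intro x hx; rw [interior_Icc] at hx
        rw [(hd x (by linarith [hx.1])).deriv]
        apply div_nonneg _ (by linarith [hx.1])
        exact pow_nonneg (by linarith [hx.1]) 3
    exact this ⟨le_refl _, h⟩ ⟨h, le_refl _⟩ h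

/-- polynomial upper bound for `log |x|` -/
lemma log_abs_bound (x : ℝ) (hx : x ≠ 0) :
    log |x| ≤ 1/2 * (1.386295 - 11/6) + 3/8*x^2 - 3/64*x^4 + x^6/384 := by
  have h := log_cubic (x^2/4) (by positivity)
  rw [Real.log_div (by positivity) (by norm_num), ← sq_abs, Real.log_pow] at h
  have h4 : log 4 = 2 * log 2 := by
    rw [show (4:ℝ) = 2^2 by norm_num, Real.log_pow]; norm_num
  have := Real.log_two_lt_d9
  rw [sq_abs] at h
  push_cast at h
  nlinarith

lemma pt_bound (x p : ℝ) (hp0 : 0 < p) (hp : p ≤ 2) :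
    exp (-((2-p)*0.472)) * (x^2 * (1 + (2-p)*0.472) - (2-p) * 
      (1/2 * (1.386295 - 11/6) * x^2+ 3/8*x^4 - 3/64*x^6 + x^8/384)) ≤ |x|^p := by
  by_cases hx : x = 0
  · subst hx; simp [Real.zero_rpow hp0.ne']
  have hl := log_abs_bound x hx
  have hax : 0 < |x| := abs_pos.2 hx
  set L := log |x|
  have e1 : |x|^p = exp (-((2-p)*0.472)) * (x^2 * exp ((2-p)*0.472 - (2-p)*L)) := by
    have : x^2 = exp (2*L) := by
      rw [← sq_abs, two_mul, exp_add, Real.exp_log hax]; ring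
    rw [this, Real.rpow_def_of_pos hax, ← exp_add, ← exp_add]
    congr 1; ring
  rw [e1]
  apply mul_le_mul_of_nonneg_left _ (exp_pos _).le
  have h2 := Real.add_one_le_exp ((2-p)*0.472 - (2-p)*L)
  have hx2 : 0 ≤ x^2 := sq_nonneg x
  have h3 := mul_le_mul_of_nonneg_left h2 hx2
  have h4 := mul_le_mul_of_nonneg_left hl (mul_nonneg (sub_nonneg.2 hp) hx2)
  nlinarith

lemma khin1 (N : ℕ) (a : Fin N → ℝ) (ha : ∑ i, a i^2 = 1) (p : ℝ) (hp0 : 0 < p) (hp : p ≤ 2) :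
    2^N ≤ exp ((2-p)*0.472) * ∑ e : Fin N → Bool, |∑ i, sg (e i) * a i|^p := by
  obtain ⟨h2, h4, h6, h8⟩ := moments N a
  rw [ha] at h2 h4 h6 h8
  have hs := Finset.sum_le_sum (s := Finset.univ) fun (e : Fin N → Bool) _ =>
    pt_bound (∑ i, sg (e i) * a i) p hp0 hp
  have hcs : (∑ i, a i^4)^2 ≤ ∑ i, a i^6 := by
    have := Finset.sum_mul_sq_le_sq_mul_sq Finset.univ (fun i => a i) (fun i => a i^3)
    rw [ha, one_mul] at this
    have e1 : ∀ i, a i * a i^3 = a i^4 := fun i => by ring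
    have e2 : ∀ i, (a i^3)^2 = a i^6 := fun i => by ring
    simpa only [e1, e2] using this
  have hterm : -0.875 * ∑ i, a i^4 + 1.5625 * ∑ i, a i^6 - 17/12 * ∑ i, a i^8 ≤ 0 := by
    rw [Finset.mul_sum, Finset.mul_sum, Finset.mul_sum, ← Finset.sum_add_distrib,
      ← Finset.sum_sub_distrib]
    apply Finset.sum_nonpos
    intro i _
    have : -0.875 * a i^4 + 1.5625 * a i^6 - 17/12 * a i^8 = 
      - (a i^4 * (17/12 * (a i^2 - 75/136)^2 + (0.875 - 17/12*(75/136)^2))) := by ring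
    rw [this, neg_nonpos]
    apply mul_nonneg (by positivity)
    have := sq_nonneg (a i^2 - 75/136)
    norm_num at *; nlinarith
  set T := ∑ e : Fin N → Bool, |∑ i, sg (e i) * a i|^p
  set p2 := ∑ i, a i^4
  set p3 := ∑ i, a i^6
  set p4 := ∑ i, a i^8
  rw [← Finset.mul_sum, Finset.sum_sub_distrib, ← Finset.sum_mul, ← Finset.mul_sum,
    Finset.sum_add_distrib, Finset.sum_sub_distrib, Finset.sum_add_distrib, ← Finset.mul_sum,
    ← Finset.mul_sum, ← Finset.mul_sum, ← Finset.sum_div, h2, h4, h6, h8] at hs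
  have hN : (0:ℝ) < 2^N := by positivity
  have hQ : 1/2 * (1.386295 - 11/6) + 3/8*(3 - 2*p2) - 3/64*(15-30*p2+16*p3) 
     + (105-420*p2+140*p2^2+448*p3-272*p4)/384 ≤ 0.472 := by
    norm_num at *; nlinarith
  have hmain : (2:ℝ)^N ≤ 2^N * 1 * (1 + (2-p)*0.472) - (2-p) * 
     (2^N * (1/2 * (1.386295 - 11/6) + 3/8*(3 - 2*p2) - 3/64*(15-30*p2+16*p3) 
     + (105-420*p2+140*p2^2+448*p3-272*p4)/384)) := by
    have := mul_le_mul_of_nonneg_left hQ (mul_nonneg (sub_nonneg.2 hp) hN.le)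
    nlinarith
  have h9 : exp (-((2-p)*0.472)) * 2^N ≤ T := by
    refine le_trans (mul_le_mul_of_nonneg_left hmain (exp_pos _).le) (le_trans (le_of_eq ?_) hs)
    congr 1; ring
  calc (2:ℝ)^N = exp ((2-p)*0.472) * (exp (-((2-p)*0.472)) * 2^N) := by
        rw [← mul_assoc, ← exp_add]; simp
    _ ≤ _ := by gcongr

lemma khin (N : ℕ) (a : Fin N → ℝ) (p : ℝ) (hp0 : 0 < p) (hp : p ≤ 2) :
    2^N * (∑ i, a i^2)^(p/2) ≤ 
      exp ((2-p)*0.472) * ∑ e : Fin N → Bool, |∑ i, sg (e i) * a i|^p := by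
  have hv0 : 0 ≤ ∑ i, a i^2 := Finset.sum_nonneg fun i _ => sq_nonneg _
  rcases hv0.eq_or_lt with hv | hv
  · rw [← hv, Real.zero_rpow (by positivity), mul_zero]
    exact mul_nonneg (exp_pos _).le (Finset.sum_nonneg fun e _ => by positivity)
  set v := ∑ i, a i^2 with hvd
  have hr : 0 < √v := Real.sqrt_pos.2 hv
  have h := khin1 N (fun i => a i / √v) (by
    simp only [div_pow, ← Finset.sum_div, Real.sq_sqrt hv0]
    exact div_self hv.ne') p hp0 hp
  have e1 : ∀ e : Fin N → Bool, |∑ i, sg (e i) * (a i / √v)|^p = 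
      |∑ i, sg (e i) * a i|^p / v^(p/2) := by
    intro e
    simp only [← mul_div_assoc, ← Finset.sum_div]
    rw [abs_div, abs_of_pos hr, Real.div_rpow (abs_nonneg _) hr.le, Real.sqrt_eq_rpow,
      ← Real.rpow_mul hv0]
    congr 2; ring
  simp only [e1, ← Finset.sum_div] at h
  have hvp : 0 < v^(p/2) := by positivity
  rw [← mul_div_assoc, le_div_iff₀ hvp] at h
  exact h
lemma blei_real {α : Type*} [Fintype α] (m : ℕ) (hm : 1 ≤ m)
    (c : (Fin (m+1) → α) → ℝ) :
    ∑ x, |c x| ^ (2*((m:ℝ)+1)/(m+2)) ≤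
      ∏ j : Fin (m+1), (∑ y : Fin m → α, (∑ a, c (j.insertNth a y)^2) ^ ((m:ℝ)/(m+1)))
        ^ (((m:ℝ)+1)/((m+2)*m)) := by
  have h := blei_aux m hm (fun x => ‖c x‖₊^2)
  have h' := NNReal.coe_le_coe.2 h
  push_cast at h'
  simp only [Real.norm_eq_abs, sq_abs] at h'
  refine le_trans (le_of_eq ?_) h'
  refine Finset.sum_congr rfl fun x _ => ?_
  rw [← sq_abs, ← Real.rpow_natCast, ← Real.rpow_mul (abs_nonneg _)]
  congr 1; push_cast; ring

lemma lin_aux {N : ℕ} (L : (Fin N → ℝ) →ₗ[ℝ] ℝ) (v : Fin N → ℝ) :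
    L v = ∑ a, v a * L (Pi.single a 1) := by
  conv_lhs => rw [← LinearMap.sum_single_apply (fun _ : Fin N => ℝ) v]
  rw [map_sum]
  refine Finset.sum_congr rfl fun a _ => ?_
  rw [← smul_eq_mul, ← map_smul]
  congr 1
  rw [← Pi.single_smul]; simp

lemma bh_main (N : ℕ) (k : ℕ) : ∀ (T : MultilinearMap ℝ (fun _ : Fin (k+1) => (Fin N → ℝ)) ℝ)
    (C : ℝ), 0 ≤ C → (∀ z : Fin (k+1) → Fin N → ℝ, (∀ i a, |z i a| ≤ 1) → |T z| ≤ C) →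
    ∑ x : Fin (k+1) → Fin N, |T (fun i => Pi.single (x i) 1)| ^ (2*((k:ℝ)+1)/(k+2)) ≤
      (exp (0.472 * (harmonic k : ℚ)) * C) ^ (2*((k:ℝ)+1)/(k+2)) := by
  induction k with
  | zero =>
    intro T C hC hT
    have e : (2*(((0:ℕ):ℝ)+1)/((0:ℕ)+2)) = 1 := by norm_num
    rw [e]
    simp only [Real.rpow_one, harmonic_zero, Rat.cast_zero, mul_zero, exp_zero, one_mul]
    let L : (Fin N → ℝ) →ₗ[ℝ] ℝ := T.toLinearMap (fun _ => 0) 0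
    have hL : ∀ v, L v = T (fun _ => v) := by
      intro v
      simp only [L, MultilinearMap.toLinearMap_apply]
      congr 1
      ext i a
      have : i = 0 := Fin.fin_one_eq_zero i
      subst this; simp
    have h1 := lin_aux L (fun a => if 0 ≤ L (Pi.single a 1) then 1 else -1)
    have h2 := hT (fun _ a => if 0 ≤ L (Pi.single a 1) then 1 else -1) (by
      intro i a; split_ifs <;> simp)
    rw [← hL, h1] at h2
    refine le_trans ?_ ((le_abs_self _).trans h2)
    apply le_of_eq
    rw [← (Equiv.funUnique (Fin 1) (Fin N)).symm.sum_comp]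
    refine Finset.sum_congr rfl fun a _ => ?_
    have : (fun i : Fin 1 => (Pi.single (((Equiv.funUnique (Fin 1) (Fin N)).symm a) i) 1 : Fin N → ℝ))
      = fun _ => Pi.single a 1 := rfl
    rw [this, ← hL]
    split_ifs with h
    · rw [abs_of_nonneg h, one_mul]
    · rw [abs_of_neg (not_le.1 h)]; ring
  | succ k ih =>
    intro T C hC hT
    set p : ℝ := 2*((k:ℝ)+1)/(k+2) with hp
    have hp0 : 0 < p := by positivity
    have hp2 : p ≤ 2 := by rw [hp, div_le_iff₀ (by positivity)]; linarith
    have hb := blei_real (k+1) (by omega) (fun x => T (fun i => Pi.single (x i) 1))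
    push_cast at hb ⊢
    have hG : ∀ j : Fin (k+2), ∑ y : Fin (k+1) → Fin N,
        (∑ a, T (fun i => Pi.single ((j.insertNth a y : Fin (k+2) → Fin N) i) 1)^2) ^
          (((k:ℝ)+1)/(k+1+1)) ≤ (exp (0.472 * (harmonic (k+1) : ℚ)) * C) ^ p := by
      intro j
      have hpp : ((k:ℝ)+1)/(k+1+1) = p/2 := by rw [hp]; field_simp; ring
      rw [hpp]
      have hpow : (0:ℝ) < 2^N := by positivity
      have hK : 0 ≤ exp (0.472 * (harmonic k : ℚ)) * C := by positivity
      have hcoef : ∀ (e : Fin N → Bool) (y : Fin (k+1) → Fin N),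
          ∑ a, sg (e a) * T (fun i => Pi.single ((j.insertNth a y : Fin (k+2) → Fin N) i) 1) =
          T.curryMid j (fun a => sg (e a)) (fun i => Pi.single (y i) 1) := by
        intro e y
        let L : (Fin N → ℝ) →ₗ[ℝ] ℝ := 
          { toFun := fun v => T.curryMid j v (fun i => Pi.single (y i) 1)
            map_add' := by intro u v; simp only [map_add, add_apply]
            map_smul' := by
              intro u v
              simp only [map_smul, smul_apply, RingHom.id_apply] }
        have := lin_aux L (fun a => sg (e a))
        refine Eq.trans ?_ this.symm
        refine Finset.sum_congr rfl fun a _ => ?_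
        congr 1
        simp only [L, LinearMap.coe_mk, AddHom.coe_mk, MultilinearMap.curryMid_apply_apply]
        congr 1
        ext i b
        refine Fin.succAboveCases j ?_ (fun i => ?_) i <;> simp
      have hIH : ∀ e : Fin N → Bool, ∑ y : Fin (k+1) → Fin N,
          |∑ a, sg (e a) * T (fun i => Pi.single ((j.insertNth a y : Fin (k+2) → Fin N) i) 1)|^p ≤
          (exp (0.472 * (harmonic k : ℚ)) * C) ^ p := by
        intro e
        simp only [hcoef]
        apply ih _ C hC
        intro z hz
        rw [MultilinearMap.curryMid_apply_apply]
        apply hT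
        intro i a
        refine Fin.succAboveCases j ?_ (fun i => ?_) i
        · simp only [Fin.insertNth_apply_same, sg]; split_ifs <;> simp
        · simp only [Fin.insertNth_apply_succAbove]; exact hz i a
      have hmul : 2^N * ∑ y : Fin (k+1) → Fin N,
        (∑ a, T (fun i => Pi.single ((j.insertNth a y : Fin (k+2) → Fin N) i) 1)^2) ^ (p/2) ≤
          2^N * (exp (0.472 * (harmonic (k+1) : ℚ)) * C) ^ p := by
        rw [Finset.mul_sum]
        calc _ ≤ ∑ y : Fin (k+1) → Fin N, exp ((2-p)*0.472) * ∑ e : Fin N → Bool, 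
              |∑ a, sg (e a) * T (fun i => Pi.single ((j.insertNth a y : Fin (k+2) → Fin N) i) 1)|^p :=
              Finset.sum_le_sum fun y _ => khin N _ p hp0 hp2
          _ = exp ((2-p)*0.472) * ∑ e : Fin N → Bool, ∑ y : Fin (k+1) → Fin N,
              |∑ a, sg (e a) * T (fun i => Pi.single ((j.insertNth a y : Fin (k+2) → Fin N) i) 1)|^p := by
              rw [← Finset.mul_sum, Finset.sum_comm]
          _ ≤ exp ((2-p)*0.472) * ∑ e : Fin N → Bool, (exp (0.472 * (harmonic k : ℚ)) * C) ^ p := by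
              gcongr with e _
              exact hIH e
          _ = 2^N * (exp (0.472 * (harmonic (k+1) : ℚ)) * C) ^ p := by
              simp only [Finset.sum_const, Finset.card_univ, Fintype.card_pi, Fintype.card_bool,
                Finset.prod_const, Fintype.card_fin, nsmul_eq_mul]
              push_cast
              rw [Real.mul_rpow (exp_pos _).le hC, Real.mul_rpow (exp_pos _).le hC,
                ← Real.exp_mul, ← Real.exp_mul, harmonic_succ]
              have : exp (0.472 * ((harmonic k + ((k+1 : ℕ) : ℚ)⁻¹ : ℚ) : ℝ) * p) =
                exp ((2-p)*0.472) * exp (0.472 * (harmonic k : ℚ) * p) := by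
                rw [← exp_add]
                congr 1
                have : ((k:ℝ)+1)⁻¹ * p = 2 - p := by rw [hp]; field_simp; ring
                push_cast
                rw [← this]; ring
              rw [this]; ring
      exact le_of_mul_le_mul_left hmul hpow
    have e0 : 2*((k:ℝ)+1+1)/(k+1+2) = p * (((k:ℝ)+1+1)/((k+1+2)*(k+1))) * (k+2) := by
      rw [hp]; field_simp
    refine hb.trans ?_
    calc _ ≤ ∏ j : Fin (k+2), ((exp (0.472 * (harmonic (k+1) : ℚ)) * C) ^ p)
            ^ (((k:ℝ)+1+1)/((k+1+2)*(k+1))) := by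
          refine Finset.prod_le_prod (fun j _ => ?_) (fun j _ => ?_)
          · exact Real.rpow_nonneg (Finset.sum_nonneg fun y _ => Real.rpow_nonneg 
              (Finset.sum_nonneg fun a _ => sq_nonneg _) _) _
          · refine Real.rpow_le_rpow (Finset.sum_nonneg fun y _ => Real.rpow_nonneg 
              (Finset.sum_nonneg fun a _ => sq_nonneg _) _) (hG j) (by positivity)
      _ = _ := by
          have hK : 0 ≤ exp (0.472 * (harmonic (k+1) : ℚ)) * C := by positivity
          rw [Finset.prod_const, Finset.card_univ, Fintype.card_fin, e0, ← Real.rpow_mul hK,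
            ← Real.rpow_natCast, ← Real.rpow_mul hK]
          congr 1; push_cast; ring

lemma num_aux (k : ℕ) (hk : 128 ≤ k) :
    exp (0.472 * (harmonic k : ℚ)) ≤ 1.306156 * (k:ℝ) ^ (0.526322 : ℝ) := by
  have hk' : (128:ℝ) ≤ k := by exact_mod_cast hk
  have hk0 : (0:ℝ) < k := by linarith
  have h1 := harmonic_le_one_add_log k
  have h2 : 7 * log 2 ≤ log k := by
    have : log ((2:ℝ)^7) ≤ log k := Real.log_le_log (by norm_num) (by norm_num1; exact hk')
    rwa [Real.log_pow] at this
  have h3 := Real.one_sub_inv_le_log_of_pos (show (0:ℝ) < 1.306156 by norm_num)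
  have h4 := Real.log_two_gt_d9
  have h5 : (0.23:ℝ) ≤ log 1.306156 := le_trans (by norm_num) h3
  rw [← Real.exp_log (show (0:ℝ) < 1.306156 by norm_num), Real.rpow_def_of_pos hk0, ← exp_add]
  apply exp_le_exp.2
  norm_num at *
  nlinarith

theorem stmt7 (n : ℕ) (hn : 2 ^ 7 < n) (N : ℕ) (hN : 0 < N)
    (U : ContinuousMultilinearMap ℝ (fun _ : Fin n => (Fin N → ℝ)) ℝ) :
    BHreal n N U ≤ 1.306156 * ((n : ℝ) - 1) ^ (0.526322 : ℝ) * ‖U‖ := by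
  obtain ⟨k, rfl⟩ : ∃ k, n = k + 1 := ⟨n - 1, by omega⟩
  have hk : 128 ≤ k := by omega
  have h := bh_main N k U.toMultilinearMap ‖U‖ (norm_nonneg _) (by
    intro z hz
    have h1 := U.le_opNorm z
    rw [Real.norm_eq_abs] at h1
    refine h1.trans ?_
    have : ∏ i, ‖z i‖ ≤ 1 := by
      apply Finset.prod_le_one (fun i _ => norm_nonneg _)
      intro i _
      rw [pi_norm_le_iff_of_nonneg zero_le_one]
      intro a; exact hz i a
    nlinarith [norm_nonneg U])
  unfold BHreal
  push_cast
  have hK : 0 ≤ exp (0.472 * (harmonic k : ℚ)) * ‖U‖ := by positivity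
  have e1 : (2 * ((k:ℝ)+1)) / (k+1+1) = 2*((k:ℝ)+1)/(k+2) := by ring
  rw [e1]
  refine (Real.rpow_le_rpow (Finset.sum_nonneg fun x _ => by positivity) h (by positivity)).trans ?_
  rw [← Real.rpow_mul hK]
  have e2 : 2*((k:ℝ)+1)/(k+2) * (((k:ℝ)+1+1)/(2*(k+1))) = 1 := by field_simp; ring
  rw [e2, Real.rpow_one]
  have := num_aux k hk
  rw [add_sub_cancel_right]
  gcongr
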